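/- arXiv:2203.10761 — 3 statements merged into one kernel-verified Lean document; each statement's English description precedes it below -/
import Mathlib

section
/- Fix an integer C ≥ 2 and label vectors y_a, y_b ∈ ℝ^C. For every z ∈ ℝ^C, Σ_{i=1}^C Σ_{j=1}^C y_a^i y_b^j (log φ(z)^{i,j} + log φ(z)^{j,i}) = Σ_{i=1}^C Σ_{j=1}^C y_a^i y_b^j (log(p^i/(1 − p^j)) + log(p^j/(1 − p^i))), where p = σ(z); i.e., the decoupled mixup cross-entropy L_DM can be written in terms of the softmax probabilities p as −Σ_{i,j} y_a^i y_b^j (log(p^i/(1−p^j)) + log(p^j/(1−p^i))). (Paper's Proposition 2.) -/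
noncomputable def softmax {C : ℕ} (z : Fin C → ℝ) (i : Fin C) : ℝ :=
  Real.exp (z i) / ∑ c, Real.exp (z c)

noncomputable def dsoftmax {C : ℕ} (z : Fin C → ℝ) (i j : Fin C) : ℝ :=
  Real.exp (z i) / ∑ c ∈ Finset.univ.erase j, Real.exp (z c)

theorem dsoftmax_eq_aux {C : ℕ} (z : Fin C → ℝ) (i j : Fin C) :
    dsoftmax z i j = softmax z i / (1 - softmax z j) := by
  have hS : 0 < ∑ c, Real.exp (z c) :=
    Finset.sum_pos (fun c _ => Real.exp_pos _) ⟨i, Finset.mem_univ i⟩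
  have h := Finset.add_sum_erase Finset.univ (fun c => Real.exp (z c)) (Finset.mem_univ j)
  have h1 : 1 - softmax z j
      = (∑ c ∈ Finset.univ.erase j, Real.exp (z c)) / ∑ c, Real.exp (z c) := by
    unfold softmax
    rw [eq_div_iff hS.ne', sub_mul, div_mul_cancel₀ _ hS.ne']
    linarith
  rw [h1]
  unfold dsoftmax softmax
  rw [div_div_div_cancel_right₀ hS.ne']

theorem stmt_5 (C : ℕ) (hC : 2 ≤ C) (ya yb : Fin C → ℝ) :
    ∀ z : Fin C → ℝ,
      ∑ i, ∑ j, ya i * yb j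
          * (Real.log (dsoftmax z i j) + Real.log (dsoftmax z j i))
        = ∑ i, ∑ j, ya i * yb j
          * (Real.log (softmax z i / (1 - softmax z j))
             + Real.log (softmax z j / (1 - softmax z i))) := by
  intro z
  simp only [dsoftmax_eq_aux]
end

section
/- Fix an integer C ≥ 2 and distinct classes i, j ∈ {1,…,C}. For every z ∈ ℝ^C, the partial derivative of the decoupled mixup loss L_DM with respect to z^i equals φ(z)^{i,j} − 1, which is ≤ 0 for all z, with strict inequality for all z whenever C ≥ 3; in particular this derivative does not depend on any mixing ratio. (The decoupled regularizer pushes the prediction on the mixed classes toward full confidence, escaping the λ-constraint.) -/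
noncomputable def LDM {C : ℕ} (i j : Fin C) (z : Fin C → ℝ) : ℝ :=
  -(Real.log (dsoftmax z i j) + Real.log (dsoftmax z j i))

theorem stmt_11 (C : ℕ) (hC : 2 ≤ C) (i j : Fin C) (hij : i ≠ j) :
    ∀ z : Fin C → ℝ,
      HasDerivAt (fun t : ℝ => LDM i j (Function.update z i t))
        (dsoftmax z i j - 1) (z i) ∧
      dsoftmax z i j - 1 ≤ 0 ∧
      (3 ≤ C → dsoftmax z i j - 1 < 0) := by
  intro z
  have hmem : i ∈ Finset.univ.erase j := by simp [hij]
  set R : ℝ := ∑ c ∈ (Finset.univ.erase j).erase i, Real.exp (z c) with hR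
  have hR0 : 0 ≤ R := Finset.sum_nonneg fun c _ => (Real.exp_pos _).le
  have hphi : dsoftmax z i j = Real.exp (z i) / (Real.exp (z i) + R) := by
    unfold dsoftmax
    rw [← Finset.add_sum_erase _ _ hmem]
  have hpos : ∀ t : ℝ, 0 < Real.exp t + R := fun t => by
    have := Real.exp_pos t
    linarith
  have hfun : (fun t : ℝ => LDM i j (Function.update z i t)) =
      fun t : ℝ => -((t - Real.log (Real.exp t + R)) + Real.log (dsoftmax z j i)) := by
    funext t
    unfold LDM
    have h1 : dsoftmax (Function.update z i t) i j = Real.exp t / (Real.exp t + R) := by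
      unfold dsoftmax
      rw [← Finset.add_sum_erase _ _ hmem, Function.update_self, hR]
      congr 2
      refine Finset.sum_congr rfl fun c hc => ?_
      rw [Function.update_of_ne (Finset.ne_of_mem_erase hc)]
    have h2 : dsoftmax (Function.update z i t) j i = dsoftmax z j i := by
      unfold dsoftmax
      rw [Function.update_of_ne hij.symm]
      congr 1
      refine Finset.sum_congr rfl fun c hc => ?_
      rw [Function.update_of_ne (Finset.ne_of_mem_erase hc)]
    rw [h1, h2, Real.log_div (Real.exp_pos t).ne' (hpos t).ne', Real.log_exp]
  refine ⟨?_, ?_, ?_⟩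
  · rw [hfun, hphi]
    have h := ((((hasDerivAt_id (z i)).sub
      (((Real.hasDerivAt_exp (z i)).add_const R).log (hpos _).ne')).add_const
        (Real.log (dsoftmax z j i)))).neg
    refine h.congr_deriv ?_
    ring
  · rw [hphi, sub_nonpos, div_le_one (hpos _)]
    linarith
  · intro h3
    rw [hphi, sub_neg, div_lt_one (hpos _)]
    have : 0 < R := by
      refine Finset.sum_pos (fun c _ => Real.exp_pos _) ?_
      rw [← Finset.card_pos, Finset.card_erase_of_mem hmem,
        Finset.card_erase_of_mem (Finset.mem_univ j), Finset.card_univ, Fintype.card_fin]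
      omega
    linarith
end

section
/- Fix an integer C ≥ 2 and distinct classes i, j ∈ {1,…,C}. The decoupled mixup loss satisfies L_DM(z) ≥ 0 for every z ∈ ℝ^C, and its infimum over ℝ^C equals 0: for every ε > 0 there exists z ∈ ℝ^C with L_DM(z) < ε. (Unlike L_MCE, the decoupled loss permits simultaneously confident predictions on both mixed classes.) -/
theorem ds_aux {C : ℕ} (z : Fin C → ℝ) (i j : Fin C) (hij : i ≠ j) :
    0 ≤ -Real.log (dsoftmax z i j) ∧ -Real.log (dsoftmax z i j) ≤
      (∑ c ∈ (Finset.univ.erase j).erase i, Real.exp (z c)) / Real.exp (z i) := by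
  have hS : 0 ≤ ∑ c ∈ (Finset.univ.erase j).erase i, Real.exp (z c) :=
    Finset.sum_nonneg (fun c _ => (Real.exp_pos _).le)
  have hp := Real.exp_pos (z i)
  have hmem : i ∈ Finset.univ.erase j := by simp [hij]
  have hq : 0 ≤ (∑ c ∈ (Finset.univ.erase j).erase i, Real.exp (z c)) / Real.exp (z i) :=
    div_nonneg hS hp.le
  have e : -Real.log (dsoftmax z i j) = Real.log
      (1 + (∑ c ∈ (Finset.univ.erase j).erase i, Real.exp (z c)) / Real.exp (z i)) := by
    unfold dsoftmax
    rw [← Real.log_inv, inv_div, ← Finset.add_sum_erase _ _ hmem, add_div, div_self hp.ne']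
  rw [e]
  refine ⟨Real.log_nonneg (by linarith), ?_⟩
  have := Real.log_le_sub_one_of_pos (show (0:ℝ) < 1 + (∑ c ∈ (Finset.univ.erase j).erase i, Real.exp (z c)) / Real.exp (z i) by linarith)
  linarith

theorem ds_aux2 {C : ℕ} (z : Fin C → ℝ) (i j : Fin C) (hz : ∀ c, c ≠ i → c ≠ j → z c = 0) :
    (∑ c ∈ (Finset.univ.erase j).erase i, Real.exp (z c)) ≤ C := by
  calc _ ≤ ∑ c ∈ (Finset.univ.erase j).erase i, (1:ℝ) := by
        refine Finset.sum_le_sum fun c hc => ?_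
        simp only [Finset.mem_erase] at hc
        rw [hz c hc.1 hc.2.1, Real.exp_zero]
    _ ≤ ∑ c : Fin C, (1:ℝ) :=
        Finset.sum_le_sum_of_subset_of_nonneg (Finset.subset_univ _) (by intros; norm_num)
    _ = C := by simp

theorem stmt_13 (C : ℕ) (hC : 2 ≤ C) (i j : Fin C) (hij : i ≠ j) :
    (∀ z : Fin C → ℝ, 0 ≤ LDM i j z) ∧
    ∀ ε : ℝ, 0 < ε → ∃ z : Fin C → ℝ, LDM i j z < ε := by
  constructor
  · intro z
    have h1 := (ds_aux z i j hij).1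
    have h2 := (ds_aux z j i hij.symm).1
    unfold LDM
    linarith
  · intro ε hε
    have hM : (0:ℝ) < 2 * C / ε + 1 := by positivity
    let z : Fin C → ℝ := fun c => if c = i ∨ c = j then Real.log (2 * C / ε + 1) else 0
    have ei : Real.exp (z i) = 2 * C / ε + 1 := by simp [z, Real.exp_log hM]
    have ej : Real.exp (z j) = 2 * C / ε + 1 := by simp [z, Real.exp_log hM]
    have h1 := (ds_aux z i j hij).2
    have h2 := (ds_aux z j i hij.symm).2
    have s1 := ds_aux2 z i j (by intro c a b; simp [z, a, b])
    have s2 := ds_aux2 z j i (by intro c a b; simp [z, a, b])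
    rw [ei] at h1
    rw [ej] at h2
    have t1 := div_le_div_of_nonneg_right s1 hM.le
    have t2 := div_le_div_of_nonneg_right s2 hM.le
    have k : (C:ℝ) / (2 * C / ε + 1) < ε / 2 := by
      rw [div_lt_iff₀ hM]
      have : ε / 2 * (2 * C / ε + 1) = C + ε / 2 := by field_simp
      linarith
    refine ⟨z, ?_⟩
    unfold LDM
    linarith
end
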